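/- arXiv:1905.13111 — 3 statements merged into one kernel-verified Lean document; each statement's English description precedes it below -/
import Mathlib

section
/- Let N be a positive integer, H a complex normed space, and U : ZMod N → (H →L[ℂ] H) a representation of ℤ/N on H, i.e. U 0 = id and U (s + t) = U s ∘ U t for all s, t. For each E ∈ ZMod N let P_E := (1/N) • ∑_{t ∈ ZMod N} e(E·t/N) • U t. Then the family (P_E)_{E ∈ ZMod N} is a complete orthogonal family: ∑_{E ∈ ZMod N} P_E = id, and P_E ∘ P_F = 0 whenever E ≠ F. -/
/-- The plane-wave phase `e(E·t/N) = exp(2πi·E.val·t.val/N)`. -/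
noncomputable def planeWave (N : ℕ) (E t : ZMod N) : ℂ :=
  Complex.exp (2 * Real.pi * Complex.I * ((E.val : ℂ) * (t.val : ℂ)) / N)

/-!
A representation `U` of `ℤ/N` is an additive character with values in the algebra of operators, and
`planeWave N E` is the complex character of `ℤ/N` with label `E`. So let `U` be a representation of
any finite abelian group `G` in a `ℂ`-algebra. Translating the summation variable shows that
`S_φ = ∑ t, φ t • U t` satisfies `U s * S_φ = φ (-s) • S_φ`, hence
`S_χ * S_φ = (∑ s, (χ - φ) s) • S_φ`, which vanishes for `χ ≠ φ` by orthogonality of characters.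
By the dual orthogonality relation, only `t = 0` survives in `∑ χ, S_χ = ∑ t, (∑ χ, χ t) • U t`,
and it contributes `card G`.
-/

section IsotypicProjector

variable {G R 𝕜 A : Type*} [Fintype G] [Semiring A]

lemma mul_sum_addChar_smul [AddGroup G] [CommSemiring R] [Algebra R A] (U : AddChar G A)
    (φ : AddChar G R) (s : G) : U s * ∑ t, φ t • U t = φ (-s) • ∑ t, φ t • U t := by
  rw [Finset.mul_sum, Finset.smul_sum]
  refine Fintype.sum_equiv (Equiv.addLeft s) _ _ fun t ↦ ?_
  rw [Equiv.coe_addLeft, mul_smul_comm, smul_smul, ← U.map_add_eq_mul, ← φ.map_add_eq_mul,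
    neg_add_cancel_left]

variable [AddCommGroup G]

lemma sum_addChar_smul_mul_sum_addChar_smul [CommSemiring R] [Algebra R A] (U : AddChar G A)
    (χ φ : AddChar G R) :
    (∑ s, χ s • U s) * ∑ t, φ t • U t = (∑ s, (χ - φ) s) • ∑ t, φ t • U t := by
  simp_rw [Finset.sum_mul, smul_mul_assoc, mul_sum_addChar_smul, smul_smul, ← AddChar.sub_apply,
    Finset.sum_smul]

/-- The projector `(1 / card G) ∑ t, χ t • U t` attached to a character `χ` of a finite abelian
group `G` acting through `U`. Since `χ t` is not inverted, its range is the part on which `U t` acts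
as the scalar `χ (-t)`. If `card G = 0` in `𝕜`, the value is `0`. -/
noncomputable def isotypicProjector [Field 𝕜] [Algebra 𝕜 A] (U : AddChar G A) (χ : AddChar G 𝕜) :
    A :=
  (Fintype.card G : 𝕜)⁻¹ • ∑ t, χ t • U t

lemma isotypicProjector_mul_of_ne [Field 𝕜] [Algebra 𝕜 A] (U : AddChar G A) {χ φ : AddChar G 𝕜}
    (h : χ ≠ φ) : isotypicProjector U χ * isotypicProjector U φ = 0 := by
  classical
  have sum_eq_zero : ∑ s, (χ - φ) s = 0 := by
    rw [AddChar.sum_eq_ite, if_neg (sub_ne_zero.mpr h)]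
  rw [isotypicProjector, isotypicProjector, smul_mul_smul_comm,
    sum_addChar_smul_mul_sum_addChar_smul, sum_eq_zero, zero_smul, smul_zero]

lemma sum_isotypicProjector [Algebra ℂ A] (U : AddChar G A) :
    ∑ χ : AddChar G ℂ, isotypicProjector U χ = 1 := by
  classical
  calc ∑ χ : AddChar G ℂ, isotypicProjector U χ
      = (Fintype.card G : ℂ)⁻¹ • ∑ t, (∑ χ : AddChar G ℂ, χ t) • U t := by
        simp_rw [isotypicProjector, ← Finset.smul_sum, Finset.sum_smul]
        rw [Finset.sum_comm]
    _ = (Fintype.card G : ℂ)⁻¹ • (Fintype.card G : ℂ) • U 0 := by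
        simp_rw [AddChar.sum_apply_eq_ite, ite_smul, zero_smul, Fintype.sum_ite_eq']
    _ = 1 := by
        rw [inv_smul_smul₀ (Nat.cast_ne_zero.mpr Fintype.card_ne_zero), U.map_zero_eq_one]

theorem energy_projectors_complete_family_general [Algebra ℂ A] (U : AddChar G A) :
    CompleteOrthogonalIdempotents fun χ : AddChar G ℂ ↦ isotypicProjector U χ :=
  CompleteOrthogonalIdempotents.iff_ortho_complete.mpr
    ⟨fun _ _ ↦ isotypicProjector_mul_of_ne U, sum_isotypicProjector U⟩

end IsotypicProjector

lemma planeWave_eq_zmodAddEquiv (N : ℕ) [NeZero N] (E t : ZMod N) :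
    planeWave N E t = AddChar.zmodAddEquiv E t := by
  have coe_zmod : AddChar.zmodAddEquiv E t = (AddChar.zmod N E t : ℂ) := rfl
  have zmod_eq := AddChar.zmod_intCast N E.val t.val
  simp only [Int.cast_natCast, ZMod.natCast_zmod_val] at zmod_eq
  rw [coe_zmod, zmod_eq, Circle.coe_exp, planeWave]
  congr 1
  push_cast
  ring

lemma isotypicProjector_zmodAddEquiv {N : ℕ} [NeZero N] {A : Type*} [Semiring A] [Algebra ℂ A]
    (U : AddChar (ZMod N) A) (E : ZMod N) :
    isotypicProjector U (AddChar.zmodAddEquiv E) =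
      (1 / (N : ℂ)) • ∑ t : ZMod N, planeWave N E t • U t := by
  simp_rw [isotypicProjector, planeWave_eq_zmodAddEquiv, ZMod.card, one_div]

/-- The energy projectors of a representation of `ℤ/N` form a complete orthogonal family:
they sum to the identity and are mutually annihilating.  This is the paper's
projector-valued spectrum (coalgebra) associated to a quantum dynamical system. -/
theorem energy_projectors_complete_family (N : ℕ) [NeZero N]
    (H : Type*) [NormedAddCommGroup H] [NormedSpace ℂ H]
    (U : ZMod N → (H →L[ℂ] H))
    (hU0 : U 0 = ContinuousLinearMap.id ℂ H)
    (hUadd : ∀ s t : ZMod N, U (s + t) = (U s).comp (U t))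
    (P : ZMod N → (H →L[ℂ] H))
    (hP : ∀ E : ZMod N, P E = (1 / (N : ℂ)) • ∑ t : ZMod N, planeWave N E t • U t) :
    (∑ E : ZMod N, P E = ContinuousLinearMap.id ℂ H) ∧
    (∀ E F : ZMod N, E ≠ F → (P E).comp (P F) = 0) := by
  let V : AddChar (ZMod N) (H →L[ℂ] H) := ⟨U, hU0, hUadd⟩
  obtain rfl := funext fun E ↦ (hP E).trans (isotypicProjector_zmodAddEquiv V E).symm
  have h := (CompleteOrthogonalIdempotents.equiv AddChar.zmodAddEquiv.toEquiv).mpr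
    (energy_projectors_complete_family_general V)
  exact ⟨h.complete, fun _ _ hEF ↦ h.ortho hEF⟩
end

section
/- Let N be a positive integer, H a complex normed space, and U : ZMod N → (H →L[ℂ] H) a representation of ℤ/N on H, i.e. U 0 = id and U (s + t) = U s ∘ U t for all s, t. Fix E ∈ ZMod N and let P_E := (1/N) • ∑_{t ∈ ZMod N} e(E·t/N) • U t. Then Schrödinger's equation holds on the range of P_E: if ψ ∈ H satisfies P_E ψ = ψ, then U t ψ = e(−E·t/N) • ψ for every t ∈ ZMod N. -/
section Character

variable {G R A : Type*} [AddGroup G] [Fintype G] [CommSemiring R] [Semiring A] [Algebra R A]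

theorem smul_mul_sum_addChar_smul (χ : AddChar G R) {U : G → A}
    (hU : ∀ s t, U (s + t) = U s * U t) (t : G) :
    (χ t • U t) * ∑ s, χ s • U s = ∑ s, χ s • U s :=
  calc
    (χ t • U t) * ∑ s, χ s • U s = ∑ s, χ (t + s) • U (t + s) := by
      simp only [Finset.mul_sum, smul_mul_smul_comm, AddChar.map_add_eq_mul, hU]
    _ = ∑ s, χ s • U s := Equiv.sum_comp (Equiv.addLeft t) fun s => χ s • U s

theorem schroedinger_discrete_periodic_general {M : Type*} [AddCommMonoid M] [Module R M]
    [Module A M] [IsScalarTower R A M] (χ : AddChar G R) {U : G → A}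
    (hU : ∀ s t, U (s + t) = U s * U t) (c : R) {ψ : M}
    (hψ : (c • ∑ t, χ t • U t) • ψ = ψ) (t : G) :
    U t • ψ = χ (-t) • ψ := by
  have hfix : χ t • U t • ψ = ψ :=
    calc
      χ t • U t • ψ = ((χ t • U t) * (c • ∑ s, χ s • U s)) • ψ := by
        rw [mul_smul, hψ, smul_assoc]
      _ = ψ := by rw [mul_smul_comm, smul_mul_sum_addChar_smul χ hU, hψ]
  calc
    U t • ψ = χ (-t) • χ t • U t • ψ := by
      rw [smul_smul, ← AddChar.map_add_eq_mul, neg_add_cancel, AddChar.map_zero_eq_one, one_smul]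
    _ = χ (-t) • ψ := by rw [hfix]

end Character

section PlaneWave

variable (N : ℕ) [NeZero N] (E t : ZMod N)

theorem planeWave_eq_mulShift_stdAddChar :
    planeWave N E t = ZMod.stdAddChar.mulShift E t := by
  simpa [planeWave] using (ZMod.stdAddChar_coe (N := N) (E.val * t.val)).symm

theorem planeWave_neg :
    planeWave N E (-t) =
      Complex.exp (-(2 * Real.pi * Complex.I * ((E.val : ℂ) * (t.val : ℂ))) / N) := by
  rw [planeWave_eq_mulShift_stdAddChar, AddChar.map_neg_eq_inv, ← planeWave_eq_mulShift_stdAddChar,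
    planeWave, neg_div, Complex.exp_neg]

end PlaneWave

/-- Exponentiated Schrödinger equation for the discrete periodic time-translation group
`ℤ/N`: states fixed by the energy projector `P_E` evolve by the phase `e(−E·t/N)`. -/
theorem schroedinger_discrete_periodic (N : ℕ) [NeZero N]
    (H : Type*) [NormedAddCommGroup H] [NormedSpace ℂ H]
    (U : ZMod N → (H →L[ℂ] H))
    (hU0 : U 0 = ContinuousLinearMap.id ℂ H)
    (hUadd : ∀ s t : ZMod N, U (s + t) = (U s).comp (U t))
    (E : ZMod N) (P : H →L[ℂ] H)
    (hP : P = (1 / (N : ℂ)) • ∑ t : ZMod N, planeWave N E t • U t)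
    (ψ : H) (hψ : P ψ = ψ) :
    ∀ t : ZMod N,
      U t ψ = Complex.exp (-(2 * Real.pi * Complex.I * ((E.val : ℂ) * (t.val : ℂ))) / N) • ψ := by
  intro t
  have : IsScalarTower ℂ (H →L[ℂ] H) H := ⟨fun _ _ _ => rfl⟩
  rw [← planeWave_neg, planeWave_eq_mulShift_stdAddChar]
  simp only [hP, planeWave_eq_mulShift_stdAddChar] at hψ
  exact schroedinger_discrete_periodic_general _ hUadd _ hψ t
end

section
/- Let ω be a positive hyperreal that is finite and not infinitesimal, i.e. there exist standard reals 0 < a ≤ b with a ≤ ω ≤ b, and let st ω denote its standard part. Let f : ℕ → ℤ and let x := Hyperreal.ofSeq (fun n ↦ (f n : ℝ)) be the corresponding hyperinteger. If x / ω is finite (|x / ω| ≤ r for some standard real r), then there exists an integer m : ℤ with st (x / ω) = m / st ω. Consequently, the set of standard parts of finite elements of (1/ω)·*ℤ equals the standard group (1/st ω)·ℤ = { m / st ω : m ∈ ℤ }. -/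
/-!
A finite hyperinteger is a standard integer: its representing sequence takes only finitely many
values on a set of the ultrafilter, and an ultrafilter concentrates such a sequence on one value.
When `ω` is finite and not infinitesimal, `x` is finite as soon as `x / ω` is, and the standard part
commutes with division by `ω`.
-/

open ArchimedeanClass Filter

theorem mk_eq_zero_of_map_le_of_le_map {R S : Type*}
    [CommRing R] [LinearOrder R] [IsStrictOrderedRing R]
    [CommRing S] [LinearOrder S] [IsStrictOrderedRing S] [Archimedean S]
    (f : S →+*o R) {x : R} {a b : S} (ha : 0 < f a) (hax : f a ≤ x) (hxb : x ≤ f b) :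
    mk x = 0 := by
  apply le_antisymm
  · calc mk x ≤ mk (f a) := mk_antitoneOn ha.le (ha.le.trans hax) hax
      _ = 0 := mk_map_of_archimedean' f (ne_zero_of_map ha.ne')
  · exact mk_nonneg_of_le_of_le_of_archimedean f hax hxb

section Germ

variable {ι : Type*} {φ : Ultrafilter ι}

theorem exists_eq_const_of_const_le_of_le_const {α : Type*} [Preorder α] [LocallyFiniteOrder α]
    {a b : α} {x : Germ (φ : Filter ι) α} (hax : (a : Germ (φ : Filter ι) α) ≤ x)
    (hxb : x ≤ (b : Germ (φ : Filter ι) α)) : ∃ c : α, x = c := by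
  induction x using Germ.inductionOn with | _ f
  have hf : ∀ᶠ i in φ, ∃ c ∈ Set.Icc a b, f i = c := by
    filter_upwards [Germ.coe_le.mp hax, Germ.coe_le.mp hxb] with i hai hib
    exact ⟨f i, ⟨hai, hib⟩, rfl⟩
  obtain ⟨c, -, hc⟩ := (Ultrafilter.eventually_exists_mem_iff (Set.finite_Icc a b)).mp hf
  exact ⟨c, Germ.coe_eq.mpr hc⟩

theorem germ_map_le_map_iff {α β : Type*} [LE α] [LE β] {l : Filter ι} {e : α → β}
    (he : ∀ {a b : α}, e a ≤ e b ↔ a ≤ b) {x y : Germ l α} : x.map e ≤ y.map e ↔ x ≤ y := by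
  induction x, y using Germ.inductionOn₂ with | _ f g
  simp only [Germ.map_coe, Germ.coe_le, EventuallyLE, Function.comp_apply, he]

theorem exists_map_intCast_eq_intCast {R : Type*} [CommRing R] [LinearOrder R]
    [IsStrictOrderedRing R] {x : Germ (φ : Filter ι) ℤ}
    (hx : 0 ≤ mk (x.map (Int.cast : ℤ → R))) :
    ∃ m : ℤ, x.map (Int.cast : ℤ → R) = m := by
  obtain ⟨n, hn⟩ : ∃ n : ℕ, |x.map (Int.cast : ℤ → R)| ≤ n := by
    simpa only [abs_one, nsmul_one] using mk_le_mk.mp (mk_one.trans_le hx)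
  obtain ⟨hlo, hhi⟩ := abs_le.mp hn
  have hlo' : (-n : ℤ) ≤ x.map (Int.cast : ℤ → R) := by simpa using hlo
  have hhi' : x.map (Int.cast : ℤ → R) ≤ (n : ℤ) := by simpa using hhi
  have hnx : ((-n : ℤ) : Germ (φ : Filter ι) ℤ) ≤ x :=
    (germ_map_le_map_iff (Int.cast_le (R := R))).mp hlo'
  have hxn : x ≤ ((n : ℤ) : Germ (φ : Filter ι) ℤ) :=
    (germ_map_le_map_iff (Int.cast_le (R := R))).mp hhi'
  obtain ⟨m, rfl⟩ := exists_eq_const_of_const_le_of_le_const hnx hxn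
  exact ⟨m, rfl⟩

/-- The class condition `mk ω = 0` encodes that `ω` is finite and not infinitesimal, `0 ≤ mk y` that
`y` is finite. -/
theorem finite_elements_of_discrete_nonstandard_group_general {K : Type*} [Field K]
    [LinearOrder K] [IsStrictOrderedRing K] {ω : Germ (φ : Filter ι) K} (hω : mk ω = 0) :
    {s : ℝ | ∃ x : Germ (φ : Filter ι) ℤ,
      0 ≤ mk (x.map Int.cast / ω) ∧ stdPart (x.map Int.cast / ω) = s} =
      Set.range fun m : ℤ ↦ (m : ℝ) / stdPart ω := by
  have stdPart_intCast_div (m : ℤ) : stdPart (m / ω) = m / stdPart ω := by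
    rw [stdPart_div (mk_intCast_nonneg m) (by simp [hω]), stdPart_intCast]
  ext s
  constructor
  · rintro ⟨x, hx, rfl⟩
    rw [mk_div, hω, sub_zero] at hx
    obtain ⟨m, hm⟩ := exists_map_intCast_eq_intCast hx
    exact ⟨m, by rw [hm, stdPart_intCast_div]⟩
  · rintro ⟨m, rfl⟩
    refine ⟨m, ?_, stdPart_intCast_div m⟩
    rw [mk_div, hω, sub_zero]
    exact mk_intCast_nonneg m

end Germ

/-- Discrete case of the identification of standard time-translation groups: if `ω` is a
finite, non-infinitesimal positive hyperreal and `x` is a hyperinteger with `x/ω` finite,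
then the standard part of `x/ω` lies in the standard group `(1/st ω)·ℤ`. -/
theorem finite_elements_of_discrete_nonstandard_group (ω : ℝ*)
    (a b : ℝ) (ha : 0 < a) (hab : a ≤ b)
    (haω : (a : ℝ*) ≤ ω) (hωb : ω ≤ (b : ℝ*))
    (f : ℕ → ℤ) (x : ℝ*) (hx : x = Hyperreal.ofSeq (fun n => (f n : ℝ)))
    (hfin : ∃ r : ℝ, |x / ω| ≤ (r : ℝ*)) :
    ∃ m : ℤ, Hyperreal.st (x / ω) = (m : ℝ) / Hyperreal.st ω := by
  subst hx
  obtain ⟨r, hr⟩ := hfin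
  have hω : mk ω = 0 :=
    mk_eq_zero_of_map_le_of_le_map Hyperreal.coeRingHom (Hyperreal.coe_pos.mpr ha) haω hωb
  have hdiv : 0 ≤ mk (Hyperreal.ofSeq (fun n ↦ (f n : ℝ)) / ω) :=
    mk_nonneg_of_le_of_le_of_archimedean Hyperreal.coeRingHom (r := -r)
      (neg_le_of_abs_le hr) (le_of_abs_le hr)
  obtain ⟨m, hm⟩ := (finite_elements_of_discrete_nonstandard_group_general hω).subset
    ⟨(f : Germ (hyperfilter ℕ : Filter ℕ) ℤ), hdiv, rfl⟩
  exact ⟨m, by rw [Hyperreal.st_eq, Hyperreal.st_eq]; exact hm.symm⟩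
end
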